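/- Let F : ℝ^m → ℝ be L-smooth and bounded below, set L' = L + 1, and let (z_k) be generated by z_{k+1} = z_k + t_k s_k with ‖g_k − ∇F(z_k)‖₂ ≤ δ_k, c₁‖g_k‖₂² ≤ −g_kᵀ s_k, ‖s_k‖₂ ≤ c₂‖g_k‖₂, and δ_k ≤ β‖g_k‖₂ for some β ∈ [0, c₁/(c₂√L')). Suppose t_k ∈ [t̄₁ + γ, t̄₂ − γ] for all k, where t̄₁ = (c₁ − √Δ)/(c₂² L'), t̄₂ = (c₁ + √Δ)/(c₂² L'), Δ = c₁² − L' c₂² β², and γ ∈ (0, (t̄₂ − t̄₁)/2]. Then every limit point z* of the sequence (z_k) satisfies ∇F(z*) = 0. -/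

import Mathlib

open scoped RealInnerProductSpace

/-!
Write `e = g - ∇F z` for the gradient error. By the descent lemma and Young's inequality
`-⟪e, d⟫ ≤ ‖e‖² / 2 + ‖d‖² / 2`, a step of size `t` lowers `F` by at least `q(t) / 2 * ‖g‖²`, where
`q(t) = 2 c₁ t - c₂² (L + 1) t² - β²`. The numbers `t₁ ≤ t₂` are the roots of `q`, so `q` is at
least `c₂² (L + 1) γ²` on `[t₁ + γ, t₂ - γ]`. Hence `F (z k)` decreases, and it converges because
`F zstar` is one of its cluster points. So `‖g k‖² → 0`, hence `∇F (z k) → 0`, and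
`∇F zstar = 0` by continuity.
-/

open Filter Topology

lemma tendsto_zero_of_le_sub_succ_of_mapClusterPt {f a : ℕ → ℝ} {l : ℝ} (ha : ∀ k, 0 ≤ a k)
    (hdec : ∀ k, a k ≤ f k - f (k + 1)) (hl : MapClusterPt l atTop f) :
    Tendsto a atTop (𝓝 0) := by
  have hanti : Antitone f :=
    antitone_nat_of_succ_le fun k ↦ sub_nonneg.1 ((ha k).trans (hdec k))
  obtain ⟨φ, hφ, hfφ⟩ := hl.tendsto_subseq
  have hf : Tendsto f atTop (𝓝 l) :=
    (tendsto_iff_tendsto_subseq_of_antitone hanti hφ.tendsto_atTop).2 hfφ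
  refine squeeze_zero ha hdec ?_
  simpa using hf.sub ((tendsto_add_atTop_iff_nat 1).2 hf)

lemma tendsto_zero_of_norm_sub_le_mul_norm {ι V : Type*} [SeminormedAddCommGroup V]
    {l : Filter ι} {u v : ι → V} {β : ℝ} (huv : ∀ i, ‖u i - v i‖ ≤ β * ‖u i‖)
    (hu : Tendsto u l (𝓝 0)) : Tendsto v l (𝓝 0) := by
  have hsub : Tendsto (fun i ↦ u i - v i) l (𝓝 0) :=
    squeeze_zero_norm huv (by simpa using hu.norm.const_mul β)
  simpa using hu.sub hsub

lemma eq_zero_of_mapClusterPt_of_sufficient_decrease {X V : Type*} [TopologicalSpace X]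
    [NormedAddCommGroup V] {F : X → ℝ} {G : X → V} {z : ℕ → X} {x : X} {g : ℕ → V} {C β : ℝ}
    (hF : ContinuousAt F x) (hG : ContinuousAt G x) (hC : 0 < C)
    (hdec : ∀ k, C * ‖g k‖ ^ 2 ≤ F (z k) - F (z (k + 1)))
    (hg : ∀ k, ‖g k - G (z k)‖ ≤ β * ‖g k‖) (hx : MapClusterPt x atTop z) : G x = 0 := by
  have hCg : Tendsto (fun k ↦ C * ‖g k‖ ^ 2) atTop (𝓝 0) :=
    tendsto_zero_of_le_sub_succ_of_mapClusterPt (fun k ↦ by positivity) hdec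
      (hx.continuousAt_comp hF)
  have hg0 : Tendsto g atTop (𝓝 0) := by
    rw [tendsto_zero_iff_norm_tendsto_zero]
    simpa [hC.ne'] using (hCg.const_mul C⁻¹).sqrt
  have hG0 : Tendsto (G ∘ z) atTop (𝓝 0) := tendsto_zero_of_norm_sub_le_mul_norm hg hg0
  obtain ⟨U, hU, hGU⟩ := mapClusterPt_iff_ultrafilter.1 (hx.continuousAt_comp hG)
  exact tendsto_nhds_unique hGU (hG0.mono_left hU)

section StepSize

variable {A b c : ℝ}

lemma mul_sub_root_mul_root_sub (hA : A ≠ 0) (hdisc : A * b ≤ c ^ 2) (t : ℝ) :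
    A * ((t - (c - √(c ^ 2 - A * b)) / A) * ((c + √(c ^ 2 - A * b)) / A - t)) =
      2 * c * t - A * t ^ 2 - b := by
  have hsq : √(c ^ 2 - A * b) ^ 2 = c ^ 2 - A * b := Real.sq_sqrt (sub_nonneg.2 hdisc)
  field_simp
  linear_combination hsq

lemma mul_sq_le_of_mem_Icc_roots {γ t : ℝ} (hA : 0 < A) (hdisc : A * b ≤ c ^ 2) (hγ : 0 ≤ γ)
    (ht : t ∈ Set.Icc ((c - √(c ^ 2 - A * b)) / A + γ) ((c + √(c ^ 2 - A * b)) / A - γ)) :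
    A * γ ^ 2 ≤ 2 * c * t - A * t ^ 2 - b := by
  rw [← mul_sub_root_mul_root_sub hA.ne' hdisc, sq]
  have hleft : γ ≤ t - (c - √(c ^ 2 - A * b)) / A := le_sub_iff_add_le'.2 ht.1
  have hright : γ ≤ (c + √(c ^ 2 - A * b)) / A - t := le_sub_comm.1 ht.2
  gcongr
  exact hγ.trans hleft

lemma sub_sqrt_div_nonneg (hA : 0 ≤ A) (hb : 0 ≤ b) (hc : 0 ≤ c) :
    0 ≤ (c - √(c ^ 2 - A * b)) / A := by
  have hsqrt : √(c ^ 2 - A * b) ≤ c :=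
    Real.sqrt_le_iff.2 ⟨hc, sub_le_self _ (mul_nonneg hA hb)⟩
  exact div_nonneg (sub_nonneg.2 hsqrt) hA

end StepSize

section ErrorRatio

variable {M β c₁ c₂ : ℝ}

lemma pos_of_lt_div_mul_sqrt (hβ0 : 0 ≤ β) (hβ1 : β < c₁ / (c₂ * √M)) : 0 < M := by
  by_contra! hM
  rw [Real.sqrt_eq_zero_of_nonpos hM, mul_zero, div_zero] at hβ1
  exact hβ1.not_ge hβ0

lemma mul_sq_le_sq_of_lt_div_mul_sqrt (hc₂ : 0 < c₂) (hβ0 : 0 ≤ β)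
    (hβ1 : β < c₁ / (c₂ * √M)) : c₂ ^ 2 * M * β ^ 2 ≤ c₁ ^ 2 := by
  have hM : 0 < M := pos_of_lt_div_mul_sqrt hβ0 hβ1
  calc c₂ ^ 2 * M * β ^ 2 = (β * (c₂ * √M)) ^ 2 := by
        rw [mul_pow, mul_pow, Real.sq_sqrt hM.le]
        ring
    _ ≤ c₁ ^ 2 := by
        gcongr
        exact ((lt_div_iff₀ (by positivity)).1 hβ1).le

end ErrorRatio

section Descent

variable {E : Type*} [NormedAddCommGroup E] [InnerProductSpace ℝ E] [CompleteSpace E]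
  {F : E → ℝ} {L : ℝ} {x : E}

lemma le_add_inner_gradient_add_sq_norm (hF : Differentiable ℝ F)
    (hlip : ∀ y, ‖gradient F y - gradient F x‖ ≤ L * ‖y - x‖) (d : E) :
    F (x + d) ≤ F x + ⟪gradient F x, d⟫ + L / 2 * ‖d‖ ^ 2 := by
  have hline (u : ℝ) :
      HasDerivAt (fun u : ℝ ↦ F (x + u • d)) ⟪gradient F (x + u • d), d⟫ u := by
    have hsegment : HasDerivAt (fun u : ℝ ↦ x + u • d) d u := by
      simpa using ((hasDerivAt_id u).smul_const d).const_add x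
    exact ((hF (x + u • d)).hasFDerivAt.comp_hasDerivAt u hsegment).congr_deriv
      inner_gradient_left.symm
  have hmajorant (u : ℝ) :
      HasDerivAt (fun u : ℝ ↦ F x + u * ⟪gradient F x, d⟫ + L / 2 * ‖d‖ ^ 2 * u ^ 2)
        (⟪gradient F x, d⟫ + L * ‖d‖ ^ 2 * u) u := by
    refine ((((hasDerivAt_id u).mul_const _).const_add _).add
      ((hasDerivAt_pow 2 u).const_mul _)).congr_deriv ?_
    push_cast
    ring
  have hslope (u : ℝ) (hu : 0 ≤ u) :
      ⟪gradient F (x + u • d), d⟫ ≤ ⟪gradient F x, d⟫ + L * ‖d‖ ^ 2 * u := by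
    rw [← sub_le_iff_le_add', ← inner_sub_left]
    calc ⟪gradient F (x + u • d) - gradient F x, d⟫
        ≤ ‖gradient F (x + u • d) - gradient F x‖ * ‖d‖ := real_inner_le_norm _ _
      _ ≤ L * ‖x + u • d - x‖ * ‖d‖ := by gcongr; exact hlip _
      _ = L * ‖d‖ ^ 2 * u := by
        rw [add_sub_cancel_left, norm_smul, Real.norm_of_nonneg hu]
        ring
  simpa using image_le_of_deriv_right_le_deriv_boundary (a := 0) (b := 1)
    (fun u _ ↦ (hline u).continuousAt.continuousWithinAt)
    (fun u _ ↦ (hline u).hasDerivWithinAt) (by simp)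
    (fun u _ ↦ (hmajorant u).continuousAt.continuousWithinAt)
    (fun u _ ↦ (hmajorant u).hasDerivWithinAt) (fun u hu ↦ hslope u hu.1)
    (Set.right_mem_Icc.2 zero_le_one)

lemma le_add_inner_add_sq_norm_of_inexact_gradient {ε : ℝ} (hε : 0 < ε) (hF : Differentiable ℝ F)
    (hlip : ∀ y, ‖gradient F y - gradient F x‖ ≤ L * ‖y - x‖) (g d : E) :
    F (x + d) ≤ F x + ⟪g, d⟫ + ε⁻¹ / 2 * ‖g - gradient F x‖ ^ 2 + (L + ε) / 2 * ‖d‖ ^ 2 := by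
  have hdescent := le_add_inner_gradient_add_sq_norm hF hlip d
  have herror : -⟪g - gradient F x, d⟫ ≤ ‖d‖ * ‖g - gradient F x‖ := by
    rw [mul_comm]
    exact (neg_le_abs _).trans (abs_real_inner_le_norm _ _)
  have hyoung : 2 * ‖d‖ * ‖g - gradient F x‖ ≤ ε * ‖d‖ ^ 2 + ε⁻¹ * ‖g - gradient F x‖ ^ 2 :=
    two_mul_le_add_mul_sq hε
  rw [inner_sub_left] at herror
  linarith

lemma mul_sq_norm_le_sub_of_inexact_step {g s : E} {c₁ c₂ β t ε : ℝ} (hε : 0 < ε)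
    (hF : Differentiable ℝ F) (hlip : ∀ y, ‖gradient F y - gradient F x‖ ≤ L * ‖y - x‖)
    (hL : 0 ≤ L + ε) (herr : ‖g - gradient F x‖ ≤ β * ‖g‖)
    (hdesc : c₁ * ‖g‖ ^ 2 ≤ -⟪g, s⟫) (hbnd : ‖s‖ ≤ c₂ * ‖g‖) (ht : 0 ≤ t) :
    (2 * c₁ * t - c₂ ^ 2 * (L + ε) * t ^ 2 - ε⁻¹ * β ^ 2) / 2 * ‖g‖ ^ 2 ≤
      F x - F (x + t • s) := by
  have hinner : ⟪g, t • s⟫ ≤ -(t * (c₁ * ‖g‖ ^ 2)) := by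
    rw [real_inner_smul_right, le_neg, ← mul_neg]
    gcongr
  have hstep : (L + ε) / 2 * ‖t • s‖ ^ 2 ≤ (L + ε) / 2 * (t * (c₂ * ‖g‖)) ^ 2 := by
    rw [norm_smul, Real.norm_of_nonneg ht]
    gcongr
  have herror : ε⁻¹ / 2 * ‖g - gradient F x‖ ^ 2 ≤ ε⁻¹ / 2 * (β * ‖g‖) ^ 2 := by gcongr
  have hdescent := le_add_inner_add_sq_norm_of_inexact_gradient hε hF hlip g (t • s)
  linarith

end Descent

theorem stmt_8_general {E : Type*} [NormedAddCommGroup E] [InnerProductSpace ℝ E]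
    [CompleteSpace E] {F : E → ℝ} {L L' : ℝ} (hF : Differentiable ℝ F)
    (hlip : ∀ x y, ‖gradient F x - gradient F y‖ ≤ L * ‖x - y‖) (hL' : L' = L + 1)
    {z s g : ℕ → E} {t : ℕ → ℝ} {c₁ c₂ : ℝ} (hc₁ : 0 < c₁) (hc₂ : 0 < c₂)
    (hupd : ∀ k, z (k + 1) = z k + t k • s k)
    (hdesc : ∀ k, c₁ * ‖g k‖ ^ 2 ≤ -⟪g k, s k⟫) (hbnd : ∀ k, ‖s k‖ ≤ c₂ * ‖g k‖)
    {β : ℝ} (hβ0 : 0 ≤ β) (hβ1 : β < c₁ / (c₂ * √L'))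
    (herr : ∀ k, ‖g k - gradient F (z k)‖ ≤ β * ‖g k‖)
    {Δ t₁ t₂ γ : ℝ} (hΔ : Δ = c₁ ^ 2 - L' * c₂ ^ 2 * β ^ 2)
    (ht₁ : t₁ = (c₁ - √Δ) / (c₂ ^ 2 * L')) (ht₂ : t₂ = (c₁ + √Δ) / (c₂ ^ 2 * L'))
    (hγ : 0 < γ) (htk : ∀ k, t k ∈ Set.Icc (t₁ + γ) (t₂ - γ))
    {zstar : E} (hz : MapClusterPt zstar atTop z) : gradient F zstar = 0 := by
  have hL'pos : 0 < L' := pos_of_lt_div_mul_sqrt hβ0 hβ1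
  have hdisc : c₂ ^ 2 * L' * β ^ 2 ≤ c₁ ^ 2 := mul_sq_le_sq_of_lt_div_mul_sqrt hc₂ hβ0 hβ1
  have hA : 0 < c₂ ^ 2 * L' := by positivity
  rw [mul_comm L'] at hΔ
  subst hΔ ht₁ ht₂
  have hdec (k : ℕ) : c₂ ^ 2 * L' * γ ^ 2 / 2 * ‖g k‖ ^ 2 ≤ F (z k) - F (z (k + 1)) := by
    have ht : 0 ≤ t k :=
      (add_nonneg (sub_sqrt_div_nonneg hA.le (sq_nonneg β) hc₁.le) hγ.le).trans (htk k).1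
    calc c₂ ^ 2 * L' * γ ^ 2 / 2 * ‖g k‖ ^ 2
        ≤ (2 * c₁ * t k - c₂ ^ 2 * L' * t k ^ 2 - β ^ 2) / 2 * ‖g k‖ ^ 2 := by
          gcongr
          exact mul_sq_le_of_mem_Icc_roots hA hdisc hγ.le (htk k)
      _ ≤ F (z k) - F (z (k + 1)) := by
          rw [hupd, hL']
          simpa using mul_sq_norm_le_sub_of_inexact_step one_pos hF (fun y ↦ hlip y (z k))
            (hL' ▸ hL'pos.le) (herr k) (hdesc k) (hbnd k) ht
  have hcont : Continuous (gradient F) :=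
    (LipschitzWith.of_dist_le' fun x y ↦ by simpa only [dist_eq_norm] using hlip x y).continuous
  exact eq_zero_of_mapClusterPt_of_sufficient_decrease hF.continuous.continuousAt
    hcont.continuousAt (by positivity) hdec herr hz

/-- every limit point of the iterates is a stationary point (bounded step sizes). -/
theorem stmt_8 (m : ℕ) (F : EuclideanSpace ℝ (Fin m) → ℝ) (L L' : ℝ)
    (hdiff : Differentiable ℝ F)
    (hlip : ∀ x y : EuclideanSpace ℝ (Fin m), ‖gradient F x - gradient F y‖ ≤ L * ‖x - y‖)
    (hbdd : ∃ B : ℝ, ∀ x, B ≤ F x)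
    (hL' : L' = L + 1)
    (z s g : ℕ → EuclideanSpace ℝ (Fin m)) (t δ : ℕ → ℝ)
    (c₁ c₂ : ℝ) (hc₁ : 0 < c₁) (hc₂ : 0 < c₂)
    (hδ : ∀ k, 0 ≤ δ k)
    (hupd : ∀ k, z (k + 1) = z k + t k • s k)
    (herr : ∀ k, ‖g k - gradient F (z k)‖ ≤ δ k)
    (hdesc : ∀ k, c₁ * ‖g k‖ ^ 2 ≤ -⟪g k, s k⟫)
    (hbnd : ∀ k, ‖s k‖ ≤ c₂ * ‖g k‖)
    (β : ℝ) (hβ0 : 0 ≤ β) (hβ1 : β < c₁ / (c₂ * Real.sqrt L'))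
    (hδβ : ∀ k, δ k ≤ β * ‖g k‖)
    (Δ t₁ t₂ : ℝ)
    (hΔ : Δ = c₁ ^ 2 - L' * c₂ ^ 2 * β ^ 2)
    (ht₁ : t₁ = (c₁ - Real.sqrt Δ) / (c₂ ^ 2 * L'))
    (ht₂ : t₂ = (c₁ + Real.sqrt Δ) / (c₂ ^ 2 * L'))
    (γ : ℝ) (hγ0 : 0 < γ) (hγ1 : γ ≤ (t₂ - t₁) / 2)
    (htk : ∀ k, t k ∈ Set.Icc (t₁ + γ) (t₂ - γ)) :
    ∀ zstar : EuclideanSpace ℝ (Fin m),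
      (∃ φ : ℕ → ℕ, StrictMono φ ∧
        Filter.Tendsto (fun n => z (φ n)) Filter.atTop (nhds zstar)) →
      gradient F zstar = 0 := by
  rintro zstar ⟨φ, hφ, hz⟩
  exact stmt_8_general hdiff hlip hL' hc₁ hc₂ hupd hdesc hbnd hβ0 hβ1
    (fun k ↦ (herr k).trans (hδβ k)) hΔ ht₁ ht₂ hγ0 htk
    (hz.mapClusterPt.of_comp hφ.tendsto_atTop)
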